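/- arXiv:1607.05930 — 3 statements merged into one kernel-verified Lean document; each statement's English description precedes it below -/
import Mathlib

section
/- Let G be a graph on n vertices such that both G and its complement Ḡ are connected. Then pc_{1,2}(G) + pc_{1,2}(Ḡ) ≤ n + 2. -/
open SimpleGraph

/-- A walk is *distance `ℓ`-proper* with respect to an edge-coloring `c` if any two
edges whose positions along the walk differ by at most `ℓ` receive distinct colors
(equivalently, no two edges of the same color appear with fewer than `ℓ` edges in
between on the walk). -/
def SimpleGraph.Walk.IsDistProper {V : Type*} {G : SimpleGraph V} {u v : V}
    (ℓ : ℕ) (c : Sym2 V → ℕ) (p : G.Walk u v) : Prop :=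
  ∀ (i j : ℕ) (hi : i < p.edges.length) (hj : j < p.edges.length),
    i < j → j ≤ i + ℓ → c (p.edges[i]'hi) ≠ c (p.edges[j]'hj)

/-- `c` is a `(1,ℓ)`-proper-path coloring of `G` using at most `k` colors
(the colors of edges of `G` lie in `{0, …, k-1}`): every pair of distinct vertices
is joined by a distance `ℓ`-proper path. -/
def SimpleGraph.IsPCColoring {V : Type*} (G : SimpleGraph V) (ℓ k : ℕ)
    (c : Sym2 V → ℕ) : Prop :=
  (∀ e ∈ G.edgeSet, c e < k) ∧
  ∀ u v : V, u ≠ v → ∃ p : G.Walk u v, p.IsPath ∧ p.IsDistProper ℓ c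

/-- The `(1,ℓ)`-proper connection number `pc_{1,ℓ}(G)`: the minimum number of colors
in an edge-coloring of `G` such that every pair of distinct vertices is connected by
a distance `ℓ`-proper path. -/
noncomputable def SimpleGraph.pc {V : Type*} (G : SimpleGraph V) (ℓ : ℕ) : ℕ :=
  sInf {k | ∃ c : Sym2 V → ℕ, G.IsPCColoring ℓ k c}

/-
A path on `p` vertices can be colored cyclically with `ℓ + 1` colors, and every further vertex can
be attached to the part already treated by an edge of a new color. So `pc ≤ n - p + ℓ + 1`, and it
is enough to find paths on `p` vertices of `G` and `q` vertices of `Gᶜ` with `p + q ≥ n + 4`, unless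
`p = n`, where `pc Gᶜ ≤ n - 1` suffices.

Take a longest path of `G`, at least as long as any path of `Gᶜ`. In `Gᶜ` an outside vertex is
adjacent to both ends of this path and to one of any two consecutive vertices of it. With at least
three outside vertices, `Gᶜ` has a long path zigzagging between the outside vertices and the path.
With one or two, there is a cycle of `Gᶜ` on four or five vertices through all of them, and since
`Gᶜ` is connected some path has one more vertex than this cycle.
-/

section DistProper

variable {V : Type*} {H : SimpleGraph V} {ℓ : ℕ} {c c' : Sym2 V → ℕ} {u v w x : V}

theorem isDistProper_nil : (Walk.nil : H.Walk u u).IsDistProper ℓ c :=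
  fun i _ hi => absurd hi (Nat.not_lt_zero i)

theorem isDistProper_reverse {p : H.Walk u v} (hp : p.IsDistProper ℓ c) :
    p.reverse.IsDistProper ℓ c := by
  intro i j hi hj hij hijℓ
  simp only [Walk.edges_reverse, List.length_reverse] at hi hj
  simp only [Walk.edges_reverse, List.getElem_reverse]
  exact (hp _ _ (by omega) (by omega) (by omega) (by omega)).symm

theorem isDistProper_of_isSubwalk {p : H.Walk u v} {q : H.Walk w x} (hpq : p.IsSubwalk q)
    (hq : q.IsDistProper ℓ c) : p.IsDistProper ℓ c := by
  obtain ⟨s, t, hst⟩ := hpq.edges_isInfix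
  have hlen : s.length + p.edges.length ≤ q.edges.length := by grind
  have hget (i : ℕ) (hi : i < p.edges.length) : p.edges[i] = q.edges[s.length + i] := by grind
  intro i j hi hj hij hijℓ
  rw [hget i hi, hget j hj]
  exact hq _ _ _ _ (by omega) (by omega)

theorem isDistProper_congr {p : H.Walk u v} (hcc' : ∀ e ∈ p.edges, c' e = c e)
    (hp : p.IsDistProper ℓ c) : p.IsDistProper ℓ c' := by
  intro i j hi hj hij hijℓ
  rw [hcc' _ (List.getElem_mem hi), hcc' _ (List.getElem_mem hj)]
  exact hp i j hi hj hij hijℓ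

theorem isDistProper_cons {p : H.Walk v w} (huv : H.Adj u v) (hp : p.IsDistProper ℓ c)
    (hne : ∀ e ∈ p.edges, c s(u, v) ≠ c e) : (Walk.cons huv p).IsDistProper ℓ c := by
  rintro (_ | i) (_ | j) hi hj hij hijℓ
  · omega
  · exact hne _ (List.getElem_mem (by simpa using hj))
  · omega
  · exact hp i j (by simpa using hi) (by simpa using hj) (by omega) (by omega)

theorem isDistProper_idxOf_edges_mod [DecidableEq V] {p : H.Walk u v} (hp : p.IsTrail) :
    p.IsDistProper ℓ fun e => p.edges.idxOf e % (ℓ + 1) := by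
  intro i j hi hj hij hijℓ hmod
  simp only [hp.edges_nodup.idxOf_getElem] at hmod
  have hdvd : ℓ + 1 ∣ j - i := (Nat.modEq_iff_dvd' hij.le).1 hmod
  have := Nat.le_of_dvd (by omega) hdvd
  omega

end DistProper

theorem exists_adj_boundary {V : Type*} {H : SimpleGraph V} (hH : H.Preconnected) {S : Set V}
    {a b : V} (ha : a ∈ S) (hb : b ∉ S) : ∃ w ∈ S, ∃ v ∉ S, H.Adj w v := by
  obtain ⟨p⟩ := hH a b
  obtain ⟨d, -, hfst, hsnd⟩ := p.exists_boundary_dart S ha hb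
  exact ⟨d.fst, hfst, d.snd, hsnd, d.adj⟩

/-- `S` is a *proper-connection core* of `H` with `k` colors: some coloring gives the edges inside
`S` colors below `k` and joins any two vertices of `S` by a distance `ℓ`-proper path inside `S`. -/
def IsPCCore {V : Type*} (H : SimpleGraph V) (ℓ k : ℕ) (S : Set V) : Prop :=
  ∃ c : Sym2 V → ℕ, (∀ e ∈ H.edgeSet, (∀ x ∈ e, x ∈ S) → c e < k) ∧
    ∀ u ∈ S, ∀ v ∈ S, ∃ p : H.Walk u v, p.IsPath ∧ p.IsDistProper ℓ c ∧ ∀ x ∈ p.support, x ∈ S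

namespace IsPCCore

variable {V : Type*} {H : SimpleGraph V} {ℓ k : ℕ} {S : Set V} {u v w : V}

theorem singleton (H : SimpleGraph V) (ℓ : ℕ) (v : V) : IsPCCore H ℓ 0 {v} := by
  refine ⟨fun _ => 0, fun e he hev => ?_, ?_⟩
  · induction e with
    | _ a b =>
      have ha : a = v := hev a (Sym2.mem_mk_left a b)
      have hb : b = v := hev b (Sym2.mem_mk_right a b)
      exact absurd (ha.trans hb.symm) (H.ne_of_adj he)
  · rintro _ rfl _ rfl
    exact ⟨Walk.nil, Walk.IsPath.nil, isDistProper_nil, by simp⟩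

theorem of_isPath {p : H.Walk u v} (hp : p.IsPath) :
    IsPCCore H ℓ (ℓ + 1) {x | x ∈ p.support} := by
  classical
  have hproper := isDistProper_idxOf_edges_mod (ℓ := ℓ) hp.isTrail
  refine ⟨fun e => p.edges.idxOf e % (ℓ + 1), fun _ _ _ => Nat.mod_lt _ ℓ.succ_pos,
    fun a (ha : a ∈ p.support) b hb => ?_⟩
  rw [Set.mem_ofPred, ← p.take_spec ha, Walk.mem_support_append_iff] at hb
  rcases hb with hb | hb
  · let q := (p.takeUntil a ha).dropUntil b hb
    have hq : q.IsSubwalk p := (Walk.isSubwalk_dropUntil _ hb).trans (p.isSubwalk_takeUntil ha)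
    refine ⟨q.reverse, ((hp.takeUntil ha).dropUntil hb).reverse,
      isDistProper_reverse (isDistProper_of_isSubwalk hq hproper), fun x hx => ?_⟩
    exact hq.support_subset (by simpa using hx)
  · let q := (p.dropUntil a ha).takeUntil b hb
    have hq : q.IsSubwalk p := (Walk.isSubwalk_takeUntil _ hb).trans (p.isSubwalk_dropUntil ha)
    exact ⟨q, (hp.dropUntil ha).takeUntil hb, isDistProper_of_isSubwalk hq hproper,
      fun x hx => hq.support_subset hx⟩

theorem insert_of_adj (hS : IsPCCore H ℓ k S) (hw : w ∈ S) (hv : v ∉ S) (hwv : H.Adj w v) :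
    IsPCCore H ℓ (k + 1) (insert v S) := by
  classical
  obtain ⟨c, hck, hc⟩ := hS
  let c' : Sym2 V → ℕ := fun e => if v ∈ e then k else c e
  have hcolor_old {a b : V} {p : H.Walk a b} (hpS : ∀ x ∈ p.support, x ∈ S) :
      ∀ e ∈ p.edges, c' e = c e ∧ c e < k := fun e he =>
    have heS : ∀ x ∈ e, x ∈ S := fun x hx => hpS x (p.mem_support_of_mem_edges he hx)
    ⟨if_neg fun hve => hv (heS v hve), hck e (p.edges_subset_edgeSet he) heS⟩
  have hcolor_new : c' s(v, w) = k := if_pos (Sym2.mem_mk_left v w)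
  have hold {a b : V} {p : H.Walk a b} (hpS : ∀ x ∈ p.support, x ∈ S)
      (hp : p.IsDistProper ℓ c) : p.IsDistProper ℓ c' :=
    isDistProper_congr (fun e he => (hcolor_old hpS e he).1) hp
  have hnew : ∀ x ∈ S, ∃ p : H.Walk v x, p.IsPath ∧ p.IsDistProper ℓ c' ∧
      ∀ y ∈ p.support, y ∈ insert v S := by
    intro x hx
    obtain ⟨p, hpath, hproper, hpS⟩ := hc w hw x hx
    refine ⟨Walk.cons hwv.symm p, hpath.cons fun hvp => hv (hpS v hvp),
      isDistProper_cons hwv.symm (hold hpS hproper) fun e he => ?_, by grind [Walk.support_cons]⟩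
    have := hcolor_old hpS e he
    omega
  refine ⟨c', fun e he heS => ?_, ?_⟩
  · by_cases hve : v ∈ e
    · simp [c', hve]
    · have : c e < k := hck e he fun x hx => (heS x hx).resolve_left fun h => hve (h ▸ hx)
      simpa [c', hve] using this.trans k.lt_succ_self
  · rintro a (rfl | ha) b (rfl | hb)
    · exact ⟨Walk.nil, Walk.IsPath.nil, isDistProper_nil, by simp⟩
    · exact hnew b hb
    · obtain ⟨p, hpath, hproper, hpS⟩ := hnew a ha
      exact ⟨p.reverse, hpath.reverse, isDistProper_reverse hproper, by simpa using hpS⟩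
    · obtain ⟨p, hpath, hproper, hpS⟩ := hc a ha b hb
      exact ⟨p, hpath, hold hpS hproper, fun y hy => Set.mem_insert_of_mem v (hpS y hy)⟩

theorem pc_le (hH : IsPCCore H ℓ k Set.univ) : H.pc ℓ ≤ k := by
  obtain ⟨c, hck, hc⟩ := hH
  refine Nat.sInf_le ⟨c, fun e he => hck e he fun x _ => Set.mem_univ x, fun u v _ => ?_⟩
  obtain ⟨p, hpath, hproper, -⟩ := hc u (Set.mem_univ u) v (Set.mem_univ v)
  exact ⟨p, hpath, hproper⟩

theorem pc_add_ncard_le [Finite V] (hH : H.Preconnected) (hS : IsPCCore H ℓ k S)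
    (hne : S.Nonempty) : H.pc ℓ + S.ncard ≤ Nat.card V + k := by
  induction hd : Nat.card V - S.ncard generalizing S k with
  | zero =>
    have hcard : S.ncard ≤ Nat.card V := Set.ncard_le_card S
    obtain rfl : S = Set.univ := (Set.eq_univ_iff_ncard S).2 (by omega)
    have := hS.pc_le
    omega
  | succ d ih =>
    obtain ⟨a, ha⟩ := hne
    obtain ⟨b, hb⟩ : ∃ b, b ∉ S := by
      by_contra! hall
      simp [Set.eq_univ_of_forall hall] at hd
    obtain ⟨w, hw, v, hv, hwv⟩ := exists_adj_boundary hH ha hb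
    have hcard : (insert v S).ncard = S.ncard + 1 := Set.ncard_insert_of_notMem hv
    have := ih (hS.insert_of_adj hw hv hwv) (Set.insert_nonempty v S) (by omega)
    omega

end IsPCCore

theorem pc_add_one_le_card {V : Type*} [Finite V] {H : SimpleGraph V} (hH : H.Connected)
    (ℓ : ℕ) : H.pc ℓ + 1 ≤ Nat.card V := by
  obtain ⟨v⟩ := hH.nonempty
  simpa using (IsPCCore.singleton H ℓ v).pc_add_ncard_le hH.preconnected (Set.singleton_nonempty v)

/-- The list `l` is the vertex sequence of a path of `H`; unlike `SimpleGraph.Walk`, it may be empty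
and is easy to cut and reassemble. -/
structure IsPathList {V : Type*} (H : SimpleGraph V) (l : List V) : Prop where
  nodup : l.Nodup
  isChain : l.IsChain H.Adj

namespace IsPathList

variable {V : Type*} {H : SimpleGraph V} {a b : V} {l : List V}

theorem singleton (H : SimpleGraph V) (a : V) : IsPathList H [a] :=
  ⟨List.nodup_singleton a, List.isChain_singleton a⟩

theorem cons (hl : IsPathList H (b :: l)) (hab : H.Adj a b) (ha : a ∉ b :: l) :
    IsPathList H (a :: b :: l) :=
  ⟨hl.nodup.cons ha, hl.isChain.cons_cons hab⟩

theorem reverse (hl : IsPathList H l) : IsPathList H l.reverse :=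
  ⟨List.nodup_reverse.2 hl.nodup, List.isChain_reverse.2 (hl.isChain.imp fun _ _ h => h.symm)⟩

theorem pc_add_length_le [Finite V] (hH : H.Preconnected) (hl : IsPathList H l) (hne : l ≠ [])
    (ℓ : ℕ) : H.pc ℓ + l.length ≤ Nat.card V + ℓ + 1 := by
  classical
  let p := Walk.ofSupport l hne hl.isChain
  have hsupp : p.support = l := Walk.support_ofSupport hne hl.isChain
  have hp : p.IsPath := Walk.IsPath.mk' (by rw [hsupp]; exact hl.nodup)
  have hcard : {x | x ∈ p.support}.ncard = l.length := by
    rw [hsupp, ← List.coe_toFinset, Set.ncard_coe_finset, List.toFinset_card_of_nodup hl.nodup]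
  have := (IsPCCore.of_isPath (ℓ := ℓ) hp).pc_add_ncard_le hH ⟨_, p.start_mem_support⟩
  omega

end IsPathList

theorem exists_isPathList_of_cycle {V : Type*} {H : SimpleGraph V} (hH : H.Preconnected)
    {c : Cycle V} (hnodup : c.Nodup) (hchain : c.Chain H.Adj) {a b : V} (ha : a ∈ c)
    (hb : b ∉ c) : ∃ l, IsPathList H l ∧ l.length = c.length + 1 := by
  obtain ⟨w, hw, v, hv, hwv⟩ := exists_adj_boundary hH (S := {x | x ∈ c}) ha hb
  obtain ⟨t, rfl⟩ : ∃ t : List V, c = (w :: t : List V) := by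
    induction c using Quotient.inductionOn with
    | h l =>
      obtain ⟨s, t, rfl⟩ := List.append_of_mem (Cycle.mem_coe_iff.1 hw)
      exact ⟨t ++ s, Cycle.coe_eq_coe.2 List.isRotated_append⟩
  have hwt : IsPathList H (w :: t) :=
    ⟨hnodup, ((Cycle.chain_coe_cons _ _ _).1 hchain).prefix (List.prefix_append (w :: t) [w])⟩
  exact ⟨v :: w :: t, hwt.cons hwv.symm hv, rfl⟩

theorem exists_list_compl {V : Type*} [Finite V] {l : List V} (hl : l.Nodup) :
    ∃ R : List V, R.Nodup ∧ (∀ v, v ∈ R ↔ v ∉ l) ∧ l.length + R.length = Nat.card V := by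
  classical
  have := Fintype.ofFinite V
  refine ⟨l.toFinsetᶜ.toList, Finset.nodup_toList _, by simp, ?_⟩
  rw [Finset.length_toList, ← List.toFinset_card_of_nodup hl, Finset.card_add_card_compl,
    Nat.card_eq_fintype_card]

theorem exists_zigzag_step {V : Type*} {H : SimpleGraph V} {U : List V} {r w a b : V}
    (hwa : w ≠ a) (hwb : w ≠ b) (hU : U ≠ []) (hw : ∀ u ∈ r :: U, H.Adj u w)
    (hab : ∀ u ∈ r :: U, H.Adj u a ∨ H.Adj u b) :
    ∃ y ∈ [w, a, b], ∃ w' ∈ [w, a, b], y ≠ w' ∧ H.Adj r y ∧ (∃ u ∈ U, H.Adj y u) ∧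
      ∀ u ∈ U, H.Adj u w' := by
  have hwU : ∀ u ∈ U, H.Adj u w := fun u hu => hw u (List.mem_cons_of_mem r hu)
  by_cases hpair : ∃ y ∈ [a, b], H.Adj r y ∧ ∃ u ∈ U, H.Adj y u
  · obtain ⟨y, hy, hry, hyU⟩ := hpair
    exact ⟨y, List.mem_cons_of_mem w hy, w, List.mem_cons_self, by grind, hry, hyU, hwU⟩
  · obtain ⟨u, hu⟩ := List.exists_mem_of_ne_nil U hU
    have hw' : ∃ w' ∈ [a, b], ∀ u ∈ U, H.Adj u w' := by
      rcases hab r List.mem_cons_self with hra | hrb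
      · exact ⟨b, by simp, fun u hu => (hab u (List.mem_cons_of_mem r hu)).resolve_left
          fun hua => hpair ⟨a, by simp, hra, u, hu, hua.symm⟩⟩
      · exact ⟨a, by simp, fun u hu => (hab u (List.mem_cons_of_mem r hu)).resolve_right
          fun hub => hpair ⟨b, by simp, hrb, u, hu, hub.symm⟩⟩
    obtain ⟨w', hw'mem, hw'U⟩ := hw'
    exact ⟨w, List.mem_cons_self, w', List.mem_cons_of_mem w hw'mem, by grind,
      hw r List.mem_cons_self, ⟨u, hu, (hwU u hu).symm⟩, hw'U⟩

/-- The path alternates between `r :: U` and the other vertices, consuming two entries of `l` per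
element of `U`; one vertex adjacent to all the remaining elements of `U` is always kept in reserve,
initially `w`. -/
theorem exists_isPathList_zigzag {V : Type*} {H : SimpleGraph V} {l U : List V} {r w : V}
    (hnodup : (r :: w :: (l ++ U)).Nodup) (hw : ∀ u ∈ r :: U, H.Adj u w)
    (hl : ∀ u ∈ r :: U, l.IsChain fun a b => H.Adj u a ∨ H.Adj u b) :
    ∃ q, IsPathList H (r :: q) ∧ q ⊆ w :: (l ++ U) ∧ min (2 * U.length) l.length < q.length := by
  rcases eq_or_ne U [] with rfl | hU
  · refine ⟨[w], (IsPathList.singleton H w).cons (hw r List.mem_cons_self) (by grind), by simp, ?_⟩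
    simp
  by_cases hlen : l.length ≤ 1
  · obtain ⟨u, hu⟩ := List.exists_mem_of_ne_nil U hU
    have hwu : IsPathList H [w, u] :=
      (IsPathList.singleton H u).cons (hw u (List.mem_cons_of_mem r hu)).symm (by grind)
    exact ⟨[w, u], hwu.cons (hw r List.mem_cons_self) (by grind), by simp [hu], by grind⟩
  obtain ⟨a, b, l, rfl⟩ : ∃ a b l', l = a :: b :: l' := by
    rcases l with _ | ⟨a, _ | ⟨b, l⟩⟩ <;> simp at hlen ⊢
  obtain ⟨y, hy, w', hw', hyw', hry, ⟨u, hu, hyu⟩, hw'U⟩ := exists_zigzag_step (by grind)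
    (by grind) hU hw fun u hu => (List.isChain_cons_cons.1 (hl u hu)).1
  obtain ⟨s, t, rfl⟩ := List.append_of_mem hu
  have hperm : (r :: w :: (a :: b :: l ++ (s ++ u :: t))).Perm
      (u :: r :: w :: a :: b :: (l ++ (s ++ t))) := by
    classical
    simp only [List.perm_iff_count, List.count_cons, List.count_append]
    omega
  have hnodup' := hperm.nodup_iff.1 hnodup
  simp only [List.mem_cons, List.not_mem_nil, or_false] at hy hw'
  obtain ⟨q, hq, hqsub, hqlen⟩ := exists_isPathList_zigzag (H := H) (l := l) (U := s ++ t)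
    (r := u) (w := w') (by grind only [= List.nodup_cons, = List.mem_cons]) (by grind)
    fun v hv => (hl v (by grind)).tail.tail
  have hsub : ∀ v ∈ q, v = w' ∨ v ∈ l ++ (s ++ t) := fun v hv => List.mem_cons.1 (hqsub hv)
  have hyq : IsPathList H (y :: u :: q) :=
    hq.cons hyu (by grind only [= List.nodup_cons, = List.mem_cons])
  exact ⟨y :: u :: q, hyq.cons hry (by grind only [= List.nodup_cons, = List.mem_cons]),
    by intro v hv; grind, by grind⟩
termination_by l.length

/-- A longest path of `H`, given by its vertex sequence. -/
structure IsLongestPathList {V : Type*} (H : SimpleGraph V) (l : List V) : Prop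
    extends IsPathList H l where
  length_le : ∀ l', IsPathList H l' → l'.length ≤ l.length

theorem exists_isLongestPathList {V : Type*} [Finite V] (H : SimpleGraph V) :
    ∃ l, IsLongestPathList H l := by
  classical
  have := Fintype.ofFinite V
  have hfin : {l | IsPathList H l}.Finite :=
    (Set.finite_coe_iff.1 (inferInstanceAs (Finite {l : List V // l.Nodup}))).subset
      fun l hl => hl.nodup
  obtain ⟨l, hl, hmax⟩ := hfin.exists_maximalFor List.length _
    ⟨[], List.nodup_nil, List.isChain_nil⟩
  exact ⟨l, hl, fun l' hl' => (le_total l'.length l.length).elim id (hmax hl')⟩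

namespace IsLongestPathList

variable {V : Type*} {G : SimpleGraph V} {l s t R : List V} {r u w x y z : V}

theorem reverse (hl : IsLongestPathList G l) : IsLongestPathList G l.reverse :=
  ⟨hl.toIsPathList.reverse, fun l' hl' => by simpa using hl.length_le l' hl'⟩

theorem not_adj_head (hl : IsLongestPathList G (x :: t)) (hu : u ∉ x :: t) : ¬ G.Adj u x :=
  fun hux => by simpa using hl.length_le _ (hl.cons hux hu)

theorem compl_adj_head (hl : IsLongestPathList G (x :: t)) (hu : u ∉ x :: t) : Gᶜ.Adj u x :=
  (compl_adj _ _ _).2 ⟨List.ne_of_not_mem_cons hu, hl.not_adj_head hu⟩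

theorem compl_adj_last (hl : IsLongestPathList G (t ++ [z])) (hu : u ∉ t ++ [z]) :
    Gᶜ.Adj u z := by
  have hrev : IsLongestPathList G (z :: t.reverse) := by simpa using hl.reverse
  exact hrev.compl_adj_head (by simpa [and_comm] using hu)

theorem not_adj_of_consecutive (hl : IsLongestPathList G (s ++ x :: y :: t))
    (hu : u ∉ s ++ x :: y :: t) (hux : G.Adj u x) : ¬ G.Adj u y := by
  intro huy
  have hinsert : IsPathList G (s ++ x :: u :: y :: t) := by
    refine ⟨by grind [hl.nodup], ?_⟩
    have hchain := hl.isChain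
    simp only [List.isChain_append_cons_cons, List.isChain_cons_cons] at hchain ⊢
    exact ⟨hchain.1, hux.symm, huy, hchain.2.2⟩
  simpa using hl.length_le _ hinsert

theorem isChain_compl_adj (hl : IsLongestPathList G l) (hu : u ∉ l) :
    l.IsChain fun a b => Gᶜ.Adj u a ∨ Gᶜ.Adj u b := by
  refine List.isChain_iff_forall_rel_of_append_cons_cons.2 fun a b s t hst => ?_
  subst hst
  have hua : u ≠ a := by grind
  have hub : u ≠ b := by grind
  by_cases hadj : G.Adj u a
  · exact .inr ((compl_adj _ _ _).2 ⟨hub, hl.not_adj_of_consecutive hu hadj⟩)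
  · exact .inl ((compl_adj _ _ _).2 ⟨hua, hadj⟩)

theorem compl_adj_ends (hG : G.Preconnected) (hl : IsLongestPathList G (x :: (t ++ [z])))
    (hu : u ∉ x :: (t ++ [z])) : Gᶜ.Adj x z := by
  refine (compl_adj _ _ _).2 ⟨by grind [hl.nodup], fun hxz => ?_⟩
  have hcycle : ((x :: (t ++ [z]) : List V) : Cycle V).Chain G.Adj := by
    rw [Cycle.chain_coe_cons, List.append_assoc, List.singleton_append, ← List.cons_append,
      List.isChain_append_cons_cons]
    exact ⟨hl.isChain, hxz.symm, List.isChain_singleton x⟩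
  obtain ⟨l', hl', hlen⟩ := exists_isPathList_of_cycle hG (Cycle.nodup_coe_iff.2 hl.nodup) hcycle
    (Cycle.mem_coe_iff.2 List.mem_cons_self) (mt Cycle.mem_coe_iff.1 hu)
  have := hl.length_le l' hl'
  rw [Cycle.length_coe] at hlen
  omega

theorem compl_adj_head_of_adj_pred (hl : IsLongestPathList G (x :: (s ++ w :: y :: t)))
    (hr : r ∉ x :: (s ++ w :: y :: t)) (hwr : G.Adj w r) : Gᶜ.Adj y x := by
  refine (compl_adj _ _ _).2 ⟨by grind [hl.nodup], fun hyx => ?_⟩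
  -- Reversing the segment from `x` to `w` would give a longer path.
  have hperm : (r :: w :: (s.reverse ++ x :: y :: t)).Perm (r :: x :: (s ++ w :: y :: t)) := by
    classical
    simp only [List.perm_iff_count, List.count_cons, List.count_append, List.count_reverse]
    omega
  have hrotate : IsPathList G (r :: w :: (s.reverse ++ x :: y :: t)) := by
    have hchain := hl.isChain
    rw [← List.cons_append, List.isChain_append_cons_cons] at hchain
    have hrev : (w :: (s.reverse ++ [x])).IsChain G.Adj := by
      simpa using List.isChain_reverse.2 (hchain.1.imp fun _ _ h => h.symm)
    refine ⟨hperm.nodup_iff.2 (hl.nodup.cons hr), ?_⟩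
    rw [List.isChain_cons_cons, ← List.cons_append, List.isChain_append_cons_cons]
    exact ⟨hwr.symm, hrev, hyx.symm, hchain.2.2⟩
  simpa [hperm.length_eq] using hl.length_le _ hrotate

theorem exists_adj_interior (hG : G.Preconnected) (hl : IsLongestPathList G l) (hu : u ∉ l) :
    ∃ x s w t z r, l = x :: (s ++ w :: (t ++ [z])) ∧ r ∉ l ∧ G.Adj w r := by
  obtain ⟨a, ha⟩ : ∃ a, a ∈ l := List.exists_mem_of_length_pos <|
    Nat.lt_of_succ_le (hl.length_le _ (IsPathList.singleton G u))
  obtain ⟨w, hw, r, hr, hwr⟩ := exists_adj_boundary hG (S := {v | v ∈ l}) ha hu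
  obtain ⟨s, t, rfl⟩ := List.append_of_mem hw
  rcases s with _ | ⟨x, s⟩
  · exact absurd hwr.symm (hl.not_adj_head hr)
  rcases t.eq_nil_or_concat' with rfl | ⟨t, z, rfl⟩
  · exact absurd hwr.symm ((compl_adj _ _ _).1 (hl.compl_adj_last hr)).2
  exact ⟨x, s, w, t, z, r, rfl, hr, hwr⟩

theorem exists_isPathList_compl_zigzag (hl : IsLongestPathList G (x :: (t ++ [z])))
    (hne : R ≠ []) (hnodup : R.Nodup) (hR : ∀ u ∈ R, u ∉ x :: (t ++ [z])) :
    ∃ q, IsPathList Gᶜ q ∧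
      min (2 * R.length + 1) ((x :: (t ++ [z])).length + 1) ≤ q.length := by
  obtain ⟨r, U, rfl⟩ := List.exists_cons_of_ne_nil hne
  have hchain : ∀ u ∈ r :: U, t.IsChain fun a b => Gᶜ.Adj u a ∨ Gᶜ.Adj u b := fun u hu =>
    (hl.isChain_compl_adj (hR u hu)).tail.prefix (List.prefix_append t [z])
  have hlast : ∀ u ∈ r :: U, Gᶜ.Adj u z := fun u hu =>
    hl.compl_adj_last (t := x :: t) (hR u hu)
  have hperm : (r :: z :: (t ++ U)).Perm ((t ++ [z]) ++ (r :: U)) := by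
    classical
    simp only [List.perm_iff_count, List.count_cons, List.count_append, List.count_nil]
    omega
  have hdisj : (r :: z :: (t ++ U)).Nodup :=
    hperm.nodup_iff.2 (hl.nodup.of_cons.append hnodup (by grind [List.Disjoint]))
  obtain ⟨q, hq, hqsub, hqlen⟩ := exists_isPathList_zigzag hdisj hlast hchain
  have hx : x ∉ r :: q := by
    have hxl : x ∉ t ++ [z] := (List.nodup_cons.1 hl.nodup).1
    grind
  refine ⟨x :: r :: q, hq.cons (hl.compl_adj_head (hR r List.mem_cons_self)).symm hx, ?_⟩
  grind

theorem four_le_length (hG : G.Preconnected) (hGc : Gᶜ.Preconnected) (hl : IsLongestPathList G l)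
    (hu : u ∉ l) (hmaxc : ∀ l', IsPathList Gᶜ l' → l'.length ≤ l.length) : 4 ≤ l.length := by
  obtain ⟨x, s, w, t, z, r, rfl, hr, -⟩ := hl.exists_adj_interior hG hu
  have hw : w ∉ [x, r, z] := by grind [hl.nodup]
  have hxz : Gᶜ.Adj x z := by
    have hl' : IsLongestPathList G (x :: ((s ++ w :: t) ++ [z])) := by simpa using hl
    exact hl'.compl_adj_ends hG (by simpa using hr)
  have hzr : Gᶜ.Adj r z :=
    compl_adj_last (t := x :: (s ++ w :: t)) (by simpa using hl) (by simpa using hr)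
  have htriangle : (([x, r, z] : List V) : Cycle V).Chain Gᶜ.Adj := by
    simpa using ⟨(hl.compl_adj_head hr).symm, hzr, hxz.symm⟩
  obtain ⟨l', hl', hlen⟩ := exists_isPathList_of_cycle hGc (a := x) (b := w)
    (by simpa using ⟨⟨hl.compl_adj_head hr |>.ne', hxz.ne⟩, hzr.ne⟩) htriangle (by simp)
    (mt Cycle.mem_coe_iff.1 hw)
  exact hlen.ge.trans (hmaxc l' hl')

theorem exists_adj_interior_succ (hG : G.Preconnected) (hl : IsLongestPathList G l) (hu : u ∉ l)
    (hlen : 4 ≤ l.length) : ∃ x s w y t z r, (x :: (s ++ w :: y :: (t ++ [z]))).Perm l ∧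
      IsLongestPathList G (x :: (s ++ w :: y :: (t ++ [z]))) ∧ r ∉ l ∧ G.Adj w r := by
  obtain ⟨x, s, w, t, z, r, rfl, hr, hwr⟩ := hl.exists_adj_interior hG hu
  rcases t with _ | ⟨y, t⟩
  · rcases s.eq_nil_or_concat' with rfl | ⟨s, y, rfl⟩
    · simp at hlen
    · exact ⟨z, [], w, y, s.reverse, x, r,
        by simpa using (x :: (s ++ [y, w, z])).reverse_perm,
        by simpa using hl.reverse, hr, hwr⟩
  · exact ⟨x, s, w, y, t, z, r, .refl _, hl, hr, hwr⟩

/-- Here `x` and `z` are the ends of `l`, and `y` comes after a `G`-neighbor of `r` on `l`. -/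
theorem exists_compl_path_ends (hG : G.Preconnected) (hl : IsLongestPathList G l) (hu : u ∉ l)
    (hlen : 4 ≤ l.length) : ∃ r ∉ l, ∃ x ∈ l, ∃ y ∈ l, ∃ z ∈ l, y ≠ z ∧ Gᶜ.Adj r y ∧
      Gᶜ.Adj y x ∧ Gᶜ.Adj x z ∧ ∀ v ∉ l, Gᶜ.Adj v x ∧ Gᶜ.Adj v z := by
  obtain ⟨x, s, w, y, t, z, r, hperm, hl', hr, hwr⟩ := hl.exists_adj_interior_succ hG hu hlen
  simp only [← hperm.mem_iff] at hr ⊢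
  have hend (v : V) (hv : v ∉ x :: (s ++ w :: y :: (t ++ [z]))) : Gᶜ.Adj v z :=
    compl_adj_last (t := x :: (s ++ w :: y :: t)) (by simpa using hl') (by simpa using hv)
  have hxz : Gᶜ.Adj x z :=
    compl_adj_ends hG (t := s ++ w :: y :: t) (by simpa using hl') (by simpa using hr)
  have hry : ¬ G.Adj r y := not_adj_of_consecutive (s := x :: s) hl' hr hwr.symm
  exact ⟨r, hr, x, by simp, y, by simp, z, by simp, by grind [hl'.nodup],
    (compl_adj _ _ _).2 ⟨by grind, hry⟩, hl'.compl_adj_head_of_adj_pred hr hwr, hxz,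
    fun v hv => ⟨hl'.compl_adj_head hv, hend v hv⟩⟩

theorem exists_isPathList_compl_of_length_le_two (hG : G.Preconnected) (hGc : Gᶜ.Preconnected)
    (hl : IsLongestPathList G l) (hlen : 4 ≤ l.length) (hnodup : R.Nodup)
    (hR : ∀ v, v ∈ R ↔ v ∉ l) (hne : R ≠ []) (hle : R.length ≤ 2) :
    ∃ l', IsPathList Gᶜ l' ∧ l'.length = R.length + 4 := by
  obtain ⟨u, hu⟩ := List.exists_mem_of_ne_nil R hne
  obtain ⟨r, hr, x, hx, y, hy, z, hz, hyz, hry, hyx, hxz, hout⟩ :=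
    hl.exists_compl_path_ends hG ((hR u).1 hu) hlen
  obtain ⟨b, hbl, hb⟩ : ∃ b ∈ l, b ∉ [x, y, z] := by
    by_contra! hsub
    have : l.length ≤ 3 := (hl.nodup.subperm hsub).length_le
    omega
  have hxyz : [x, y, z].Nodup := by simpa using ⟨⟨hyx.ne', hxz.ne⟩, hyz⟩
  obtain hone | htwo : R.length = 1 ∨ R.length = 2 := by
    have := List.length_pos_of_ne_nil hne
    omega
  · have hsquare : (([r, y, x, z] : List V) : Cycle V).Chain Gᶜ.Adj := by
      simpa using ⟨hry, hyx, hxz, (hout r hr).2.symm⟩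
    obtain ⟨l', hl', hlen'⟩ := exists_isPathList_of_cycle hGc (a := r) (b := b)
      (Cycle.nodup_coe_iff.2 (by grind)) hsquare (by simp) (mt Cycle.mem_coe_iff.1 (by grind))
    exact ⟨l', hl', by rw [hlen', hone]; rfl⟩
  · obtain ⟨s, hs, hsr⟩ : ∃ s ∉ l, s ≠ r := by
      by_contra! hsub
      have : R.length ≤ 1 := (hnodup.subperm (l₂ := [r]) (by grind)).length_le
      omega
    have hpentagon : (([r, y, x, s, z] : List V) : Cycle V).Chain Gᶜ.Adj := by
      simpa using ⟨hry, hyx, (hout s hs).1.symm, (hout s hs).2, (hout r hr).2.symm⟩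
    obtain ⟨l', hl', hlen'⟩ := exists_isPathList_of_cycle hGc (a := r) (b := b)
      (Cycle.nodup_coe_iff.2 (by grind)) hpentagon (by simp) (mt Cycle.mem_coe_iff.1 (by grind))
    exact ⟨l', hl', by rw [hlen', htwo]; rfl⟩

theorem exists_isPathList_compl [Finite V] (hG : G.Preconnected) (hGc : Gᶜ.Preconnected)
    (hl : IsLongestPathList G l) (hmaxc : ∀ l', IsPathList Gᶜ l' → l'.length ≤ l.length)
    (hcard : l.length < Nat.card V) :
    ∃ l', IsPathList Gᶜ l' ∧ Nat.card V + 4 ≤ l.length + l'.length := by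
  obtain ⟨R, hnodup, hR, hRlen⟩ := exists_list_compl hl.nodup
  have hne : R ≠ [] := List.ne_nil_of_length_pos (by omega)
  obtain ⟨u, hu⟩ := List.exists_mem_of_ne_nil R hne
  have hlen := hl.four_le_length hG hGc ((hR u).1 hu) hmaxc
  obtain hR3 | hR2 := Nat.lt_or_ge 2 R.length
  · obtain ⟨x, s, w, t, z, -, rfl, -⟩ := hl.exists_adj_interior hG ((hR u).1 hu)
    obtain ⟨q, hq, hqlen⟩ := exists_isPathList_compl_zigzag (t := s ++ w :: t) (z := z) (x := x)
      (by simpa using hl) hne hnodup (by simpa using fun v => (hR v).1)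
    have := hmaxc q hq
    exact ⟨q, hq, by grind⟩
  · obtain ⟨q, hq, hqlen⟩ :=
      hl.exists_isPathList_compl_of_length_le_two hG hGc hlen hnodup hR hne hR2
    exact ⟨q, hq, by omega⟩

end IsLongestPathList

theorem pc_add_pc_compl_le_of_isLongestPathList {V : Type*} [Finite V] {G : SimpleGraph V} {ℓ : ℕ}
    (hℓ : 2 ≤ ℓ) (hG : G.Connected) (hGc : Gᶜ.Connected) {l : List V}
    (hl : IsLongestPathList G l) (hmaxc : ∀ l', IsPathList Gᶜ l' → l'.length ≤ l.length) :
    G.pc ℓ + Gᶜ.pc ℓ + 2 ≤ Nat.card V + 2 * ℓ := by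
  obtain ⟨v⟩ := hG.nonempty
  have hpos : 0 < l.length := hl.length_le _ (IsPathList.singleton G v)
  have hpc := hl.pc_add_length_le hG.preconnected (List.ne_nil_of_length_pos hpos) ℓ
  obtain hcard | hcard := Nat.lt_or_ge l.length (Nat.card V)
  · obtain ⟨q, hq, hlen⟩ := hl.exists_isPathList_compl hG.preconnected hGc.preconnected hmaxc hcard
    have hpcc := hq.pc_add_length_le hGc.preconnected (List.ne_nil_of_length_pos (by omega)) ℓ
    omega
  · have hpcc := pc_add_one_le_card hGc ℓ
    omega

theorem pc_add_pc_compl_le_general {V : Type*} [Finite V] (G : SimpleGraph V) {ℓ : ℕ}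
    (hℓ : 2 ≤ ℓ) (hG : G.Connected) (hGc : Gᶜ.Connected) :
    G.pc ℓ + Gᶜ.pc ℓ + 2 ≤ Nat.card V + 2 * ℓ := by
  obtain ⟨l, hl⟩ := exists_isLongestPathList G
  obtain ⟨lc, hlc⟩ := exists_isLongestPathList Gᶜ
  obtain hle | hle := le_total lc.length l.length
  · exact pc_add_pc_compl_le_of_isLongestPathList hℓ hG hGc hl fun l' hl' =>
      (hlc.length_le l' hl').trans hle
  · have := pc_add_pc_compl_le_of_isLongestPathList hℓ hGc (by rwa [compl_compl]) hlc fun l' hl' =>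
      (hl.length_le l' (by rwa [compl_compl] at hl')).trans hle
    rw [compl_compl] at this
    omega

/-- If `G` and its complement are both connected graphs on `n` vertices, then
`pc_{1,2}(G) + pc_{1,2}(Ḡ) ≤ n + 2`. -/
theorem pc_add_pc_compl_le {V : Type*} [Fintype V] (G : SimpleGraph V)
    (hG : G.Connected) (hGc : Gᶜ.Connected) :
    G.pc 2 + Gᶜ.pc 2 ≤ Fintype.card V + 2 := by
  have := pc_add_pc_compl_le_general G le_rfl hG hGc
  rw [Nat.card_eq_fintype_card] at this
  omega
end

section
/- Let n₁, n₂ ≥ 1 and let G be the double star T(n₁,n₂). Then the complement Ḡ is connected and pc_{1,2}(Ḡ) = 3. -/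
open SimpleGraph

/-- The double star `T(n₁, n₂)`: two adjacent centers, the first with `n₁` pendant
leaves and the second with `n₂` pendant leaves. -/
def doubleStar (n₁ n₂ : ℕ) : SimpleGraph (Fin 2 ⊕ (Fin n₁ ⊕ Fin n₂)) :=
  SimpleGraph.fromRel (fun a b =>
    (a = Sum.inl 0 ∧ b = Sum.inl 1) ∨
    (a = Sum.inl 0 ∧ ∃ i : Fin n₁, b = Sum.inr (Sum.inl i)) ∨
    (a = Sum.inl 1 ∧ ∃ j : Fin n₂, b = Sum.inr (Sum.inr j)))

/-!
The centers `x`, `y` of the double star are at distance `3` in the complement: they are not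
adjacent there, and every vertex is a neighbor of one of them in the star. A distance `2`-proper
path between them begins with three edges of distinct colors, so three colors are needed.
Conversely the leaves form a clique in the complement, which contains a path `x a b y` through
leaves `a`, `b`. Giving one color to the edges at `x`, another to those at `y` and a third to
those of the clique makes all pairs connected by *rainbow* paths, and these are distance
`ℓ`-proper for every `ℓ`.
-/

variable {V α : Type*} {G : SimpleGraph V} {u v w x y : V}

section ProperConnection

variable {ℓ k : ℕ} {c : Sym2 V → ℕ}

theorem connected_of_isPCColoring [Nonempty V] (h : G.IsPCColoring ℓ k c) : G.Connected where
  preconnected u v := by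
    obtain rfl | huv := eq_or_ne u v
    · exact .rfl
    · obtain ⟨p, -⟩ := h.2 u v huv
      exact p.reachable

theorem pc_le_of_isPCColoring (h : G.IsPCColoring ℓ k c) : G.pc ℓ ≤ k :=
  Nat.sInf_le ⟨c, h⟩

theorem exists_isPCColoring_pc (h : G.IsPCColoring ℓ k c) :
    ∃ c', G.IsPCColoring ℓ (G.pc ℓ) c' :=
  Nat.sInf_mem (s := {k | ∃ c, G.IsPCColoring ℓ k c}) ⟨k, c, h⟩

theorem nodup_map_take_edges_of_isDistProper {p : G.Walk u v} (hp : p.IsDistProper ℓ c) :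
    ((p.edges.take (ℓ + 1)).map c).Nodup := by
  refine List.pairwise_iff_getElem.2 fun i j hi hj hij ↦ ?_
  simp only [List.length_map, List.length_take, lt_min_iff] at hi hj
  simpa using hp i j hi.2 hj.2 hij (by lia)

theorem min_length_le_of_isDistProper {p : G.Walk u v} (hp : p.IsDistProper ℓ c)
    (hc : ∀ e ∈ G.edgeSet, c e < k) : min (ℓ + 1) p.length ≤ k := by
  have hsub : (p.edges.take (ℓ + 1)).map c ⊆ List.range k := by
    intro i hi
    obtain ⟨e, he, rfl⟩ := List.mem_map.1 hi
    exact List.mem_range.2 (hc e (p.edges_subset_edgeSet (List.mem_of_mem_take he)))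
  simpa using ((nodup_map_take_edges_of_isDistProper hp).subperm hsub).length_le

theorem min_dist_le_of_isPCColoring (h : G.IsPCColoring ℓ k c) (u v : V) :
    min (ℓ + 1) (G.dist u v) ≤ k := by
  obtain rfl | huv := eq_or_ne u v
  · simp
  · obtain ⟨p, -, hp⟩ := h.2 u v huv
    exact (min_le_min_left _ (dist_le p)).trans (min_length_le_of_isDistProper hp h.1)

theorem min_dist_le_pc (h : G.IsPCColoring ℓ k c) (u v : V) :
    min (ℓ + 1) (G.dist u v) ≤ G.pc ℓ := by
  obtain ⟨c', hc'⟩ := exists_isPCColoring_pc h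
  exact min_dist_le_of_isPCColoring hc' u v

end ProperConnection

section Rainbow

/-- Two vertices are rainbow reachable under the edge-coloring `c` if some walk between them has
edges of pairwise distinct colors. Repeated vertices are allowed since they can be bypassed. -/
def RainbowReachable (G : SimpleGraph V) (c : Sym2 V → α) (u v : V) : Prop :=
  ∃ p : G.Walk u v, (p.edges.map c).Nodup

theorem rainbowReachable_of_adj (c : Sym2 V → α) (h : G.Adj u v) : RainbowReachable G c u v :=
  ⟨h.toWalk, by simp⟩

theorem rainbowReachable_of_adj_of_adj {c : Sym2 V → α} (huv : G.Adj u v) (hvw : G.Adj v w)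
    (hc : c s(u, v) ≠ c s(v, w)) : RainbowReachable G c u w :=
  ⟨.cons huv hvw.toWalk, by simpa using hc⟩

theorem RainbowReachable.symm {c : Sym2 V → α} :
    RainbowReachable G c u v → RainbowReachable G c v u := by
  rintro ⟨p, hp⟩
  exact ⟨p.reverse, by simpa using hp⟩

theorem RainbowReachable.exists_isPath_isDistProper {c : Sym2 V → ℕ}
    (h : RainbowReachable G c u v) (ℓ : ℕ) :
    ∃ p : G.Walk u v, p.IsPath ∧ p.IsDistProper ℓ c := by
  classical
  obtain ⟨p, hp⟩ := h
  have hnodup : p.bypass.edges.Pairwise (c · ≠ c ·) :=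
    List.pairwise_map.1 ((p.edges_bypass_sublist_edges.map c).nodup hp)
  exact ⟨p.bypass, p.bypass_isPath,
    fun i j hi hj hij _ ↦ List.pairwise_iff_getElem.1 hnodup i j hi hj hij⟩

theorem isPCColoring_of_pairwise_rainbowReachable {k : ℕ} {c : Sym2 V → ℕ}
    (hc : ∀ e ∈ G.edgeSet, c e < k) (h : Pairwise (RainbowReachable G c)) (ℓ : ℕ) :
    G.IsPCColoring ℓ k c :=
  ⟨hc, fun _ _ huv ↦ (h huv).exists_isPath_isDistProper ℓ⟩

end Rainbow

section TwoHub

variable [DecidableEq V]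

/-- The edge-coloring with color `0` on the edges at `x`, color `1` on the other edges at `y`, and
color `2` elsewhere. It rainbow connects graphs in which the vertices other than the two hubs `x`
and `y` form a clique containing distinct neighbors of `x` and `y`. -/
def twoHubColoring (x y : V) (e : Sym2 V) : ℕ :=
  if x ∈ e then 0 else if y ∈ e then 1 else 2

theorem twoHubColoring_lt_three (x y : V) (e : Sym2 V) : twoHubColoring x y e < 3 := by
  unfold twoHubColoring
  split_ifs <;> decide

theorem twoHubColoring_eq_two_iff {e : Sym2 V} : twoHubColoring x y e = 2 ↔ x ∉ e ∧ y ∉ e := by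
  unfold twoHubColoring
  split_ifs <;> simp_all

theorem rainbowReachable_of_mem_hubs {z : V} (hS : G.IsClique {x, y}ᶜ) (hz : z ∈ ({x, y} : Set V))
    (hw : w ∉ ({x, y} : Set V)) (hv : v ∉ ({x, y} : Set V)) (hzw : G.Adj z w) :
    RainbowReachable G (twoHubColoring x y) z v := by
  obtain rfl | hwv := eq_or_ne w v
  · exact rainbowReachable_of_adj _ hzw
  · have hclique : twoHubColoring x y s(w, v) = 2 := by
      rw [twoHubColoring_eq_two_iff]
      grind
    have hhub : twoHubColoring x y s(z, w) ≠ 2 := by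
      rw [Ne, twoHubColoring_eq_two_iff]
      grind
    exact rainbowReachable_of_adj_of_adj hzw (hS hw hv hwv) (hclique ▸ hhub)

theorem rainbowReachable_hubs {a b : V} (hxy : x ≠ y) (hab : G.Adj a b)
    (ha : a ∉ ({x, y} : Set V)) (hb : b ∉ ({x, y} : Set V)) (hxa : G.Adj x a) (hby : G.Adj b y) :
    RainbowReachable G (twoHubColoring x y) x y := by
  have hcolors : [s(x, a), s(a, b), s(b, y)].map (twoHubColoring x y) = [0, 2, 1] := by
    grind [twoHubColoring]
  exact ⟨.cons hxa (.cons hab hby.toWalk), by simp_all⟩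

theorem pairwise_rainbowReachable_twoHubColoring {a b : V} (hS : G.IsClique {x, y}ᶜ)
    (ha : a ∉ ({x, y} : Set V)) (hb : b ∉ ({x, y} : Set V)) (hab : a ≠ b)
    (hxa : G.Adj x a) (hby : G.Adj b y) :
    Pairwise (RainbowReachable G (twoHubColoring x y)) := by
  have hub_reaches {z v : V} (hz : z ∈ ({x, y} : Set V)) (hv : v ∉ ({x, y} : Set V)) :
      RainbowReachable G (twoHubColoring x y) z v := by
    obtain rfl | rfl := hz
    · exact rainbowReachable_of_mem_hubs hS (by simp) ha hv hxa
    · exact rainbowReachable_of_mem_hubs hS (by simp) hb hv hby.symm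
  intro u v huv
  by_cases hu : u ∈ ({x, y} : Set V) <;> by_cases hv : v ∈ ({x, y} : Set V)
  · have hubs (hxy : x ≠ y) := rainbowReachable_hubs hxy (hS ha hb hab) ha hb hxa hby
    obtain rfl | rfl := hu <;> obtain rfl | rfl := hv
    · exact absurd rfl huv
    · exact hubs huv
    · exact (hubs huv.symm).symm
    · exact absurd rfl huv
  · exact hub_reaches hu hv
  · exact (hub_reaches hv hu).symm
  · exact rainbowReachable_of_adj _ (hS hu hv huv)

end TwoHub

theorem three_le_length_compl_of_forall_adj_or_adj (hdom : ∀ w, G.Adj x w ∨ G.Adj w y)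
    (p : Gᶜ.Walk x y) : 3 ≤ p.length := by
  have hxy : G.Adj x y := (hdom x).resolve_left G.irrefl
  match p with
  | .nil => exact absurd hxy G.irrefl
  | .cons h .nil => exact absurd hxy h.2
  | .cons (v := w) h (.cons h' .nil) => exact absurd (hdom w) (not_or.2 ⟨h.2, h'.2⟩)
  | .cons _ (.cons _ (.cons _ _)) => simp

theorem three_le_dist_compl_of_forall_adj_or_adj (hdom : ∀ w, G.Adj x w ∨ G.Adj w y)
    (hr : Gᶜ.Reachable x y) : 3 ≤ Gᶜ.dist x y := by
  obtain ⟨p, hp⟩ := hr.exists_walk_length_eq_dist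
  exact hp ▸ three_le_length_compl_of_forall_adj_or_adj hdom p

section DoubleStar

variable {n₁ n₂ : ℕ}

theorem doubleStar_adj_center_or_adj_center (w : Fin 2 ⊕ (Fin n₁ ⊕ Fin n₂)) :
    (doubleStar n₁ n₂).Adj (.inl 0) w ∨ (doubleStar n₁ n₂).Adj w (.inl 1) := by
  rcases w with i | i | j
  · fin_cases i <;> simp [doubleStar]
  · simp [doubleStar]
  · simp [doubleStar]

theorem isClique_compl_doubleStar :
    (doubleStar n₁ n₂)ᶜ.IsClique {.inl 0, .inl 1}ᶜ := by
  rintro (i | u) hu (j | v) hv huv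
  · fin_cases i <;> simp at hu
  · fin_cases i <;> simp at hu
  · fin_cases j <;> simp at hv
  · simpa [doubleStar] using huv

theorem exists_isPCColoring_compl_doubleStar (h₁ : 1 ≤ n₁) (h₂ : 1 ≤ n₂) (ℓ : ℕ) :
    ∃ c, (doubleStar n₁ n₂)ᶜ.IsPCColoring ℓ 3 c := by
  let a : Fin 2 ⊕ (Fin n₁ ⊕ Fin n₂) := .inr (.inr ⟨0, h₂⟩)
  let b : Fin 2 ⊕ (Fin n₁ ⊕ Fin n₂) := .inr (.inl ⟨0, h₁⟩)
  have hrainbow := pairwise_rainbowReachable_twoHubColoring (a := a) (b := b)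
    isClique_compl_doubleStar (by simp [a]) (by simp [b]) (by simp [a, b])
    (by simp [a, doubleStar]) (by simp [b, doubleStar])
  exact ⟨_, isPCColoring_of_pairwise_rainbowReachable
    (fun e _ ↦ twoHubColoring_lt_three _ _ e) hrainbow ℓ⟩

end DoubleStar

theorem pc_compl_doubleStar_general (n₁ n₂ ℓ : ℕ) (h₁ : 1 ≤ n₁) (h₂ : 1 ≤ n₂) (hℓ : 2 ≤ ℓ) :
    (doubleStar n₁ n₂)ᶜ.Connected ∧ (doubleStar n₁ n₂)ᶜ.pc ℓ = 3 := by
  obtain ⟨c, hc⟩ := exists_isPCColoring_compl_doubleStar h₁ h₂ ℓ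
  have hconn := connected_of_isPCColoring hc
  have hdist : 3 ≤ (doubleStar n₁ n₂)ᶜ.dist (.inl 0) (.inl 1) :=
    three_le_dist_compl_of_forall_adj_or_adj doubleStar_adj_center_or_adj_center (hconn _ _)
  refine ⟨hconn, (pc_le_of_isPCColoring hc).antisymm ?_⟩
  calc 3 ≤ min (ℓ + 1) ((doubleStar n₁ n₂)ᶜ.dist (.inl 0) (.inl 1)) := le_min (by lia) hdist
    _ ≤ (doubleStar n₁ n₂)ᶜ.pc ℓ := min_dist_le_pc hc _ _

/-- For `n₁, n₂ ≥ 1`, the complement of the double star `T(n₁,n₂)` is connected and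
has `(1,2)`-proper connection number `3`. -/
theorem pc_compl_doubleStar (n₁ n₂ : ℕ) (h₁ : 1 ≤ n₁) (h₂ : 1 ≤ n₂) :
    (doubleStar n₁ n₂)ᶜ.Connected ∧ (doubleStar n₁ n₂)ᶜ.pc 2 = 3 :=
  pc_compl_doubleStar_general n₁ n₂ 2 h₁ h₂ le_rfl
end

section
/- Let G be a graph on n vertices such that both G and its complement Ḡ are connected, and suppose G has a cut vertex u such that G − u has at least three connected components. Then pc_{1,2}(Ḡ) ≤ 4. -/
open SimpleGraph

/-! The complement of a disconnected graph contains a spanning complete multipartite graph. With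
three parts indexed by `Fin 3`, give an edge between parts `i` and `j` the color `i + j`: the three
colors around a triangle through the parts are distinct, so two vertices of the same part are joined
by a rainbow walk of length three visiting all parts, while any other two are adjacent. This applies
to `Gᶜ - u`, and a fourth color on all edges at `u` connects `u` to the rest through one of its
neighbors. A rainbow path is distance `ℓ`-proper for every `ℓ`. -/

section Rainbow

variable {V α : Type*} {G : SimpleGraph V} {c : Sym2 V → α} {u v : V}

/-- A walk is *rainbow* if its edges have pairwise distinct colors. -/
def IsRainbow (c : Sym2 V → α) (p : G.Walk u v) : Prop :=
  (p.edges.map c).Nodup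

/-- An edge coloring is *rainbow* if any two vertices are joined by a rainbow walk. Asking for a
path instead would be equivalent, by `IsRainbow.bypass`. -/
def IsRainbowColoring (G : SimpleGraph V) (c : Sym2 V → α) : Prop :=
  ∀ u v : V, ∃ p : G.Walk u v, IsRainbow c p

theorem IsRainbow.nil : IsRainbow c (Walk.nil : G.Walk u u) := by
  simp [IsRainbow]

theorem IsRainbow.reverse {p : G.Walk u v} (hp : IsRainbow c p) : IsRainbow c p.reverse := by
  simpa [IsRainbow] using hp

theorem IsRainbow.bypass [DecidableEq V] {p : G.Walk u v} (hp : IsRainbow c p) :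
    IsRainbow c p.bypass :=
  hp.sublist (p.edges_bypass_sublist_edges.map c)

theorem IsRainbow.isDistProper {c : Sym2 V → ℕ} {p : G.Walk u v} (hp : IsRainbow c p) (ℓ : ℕ) :
    p.IsDistProper ℓ c := by
  intro i j hi hj hij _ heq
  have hij' : i = j := (List.Nodup.getElem_inj_iff hp (hi := by simpa using hi)
    (hj := by simpa using hj)).1 (by simpa using heq)
  exact hij.ne hij'

theorem IsRainbowColoring.isPCColoring {k : ℕ} {c : Sym2 V → Fin k} (hc : IsRainbowColoring G c)
    (ℓ : ℕ) : G.IsPCColoring ℓ k (fun e ↦ c e) := by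
  classical
  refine ⟨fun e _ ↦ (c e).isLt, fun u v _ ↦ ?_⟩
  obtain ⟨p, hp⟩ := hc u v
  have hp' : IsRainbow (fun e ↦ (c e : ℕ)) p := by
    simpa [IsRainbow, Function.comp_def] using List.Nodup.map Fin.val_injective hp
  exact ⟨p.bypass, p.bypass_isPath, hp'.bypass.isDistProper ℓ⟩

end Rainbow

section AddVertex

variable {V : Type*} {G : SimpleGraph V} {u : V} {k : ℕ} {c : Sym2 ({u}ᶜ : Set V) → Fin k}

/-- The extension of an edge coloring from `V \ {u}` to `V` that gives every edge at `u` the new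
color `Fin.last k`. -/
noncomputable def extendColoring (c : Sym2 ({u}ᶜ : Set V) → Fin k) : Sym2 V → Fin (k + 1) :=
  Function.extend (Sym2.map Subtype.val) (Fin.castSucc ∘ c) fun _ ↦ Fin.last k

theorem extendColoring_map_val (e : Sym2 ({u}ᶜ : Set V)) :
    extendColoring c (e.map Subtype.val) = (c e).castSucc :=
  (Sym2.map.injective Subtype.val_injective).extend_apply ..

theorem extendColoring_mk_left (v : V) : extendColoring c s(u, v) = Fin.last k := by
  refine Function.extend_apply' _ _ _ ?_
  rintro ⟨e, he⟩
  have hu : u ∈ e.map Subtype.val := he ▸ Sym2.mem_mk_left u v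
  obtain ⟨x, -, hx⟩ := Sym2.mem_map.1 hu
  exact x.2 hx

theorem exists_walk_edges_eq_map_val {s : Set V} {a b : s} (p : (G.induce s).Walk a b) :
    ∃ q : G.Walk a b, q.edges = p.edges.map (Sym2.map Subtype.val) :=
  ⟨p.map (Embedding.induce s).toHom, p.edges_map _⟩

theorem IsRainbowColoring.extend (hc : IsRainbowColoring (G.induce {u}ᶜ) c)
    (hG : G.Preconnected) : IsRainbowColoring G (extendColoring c) := by
  have avoiding_u (a b : ({u}ᶜ : Set V)) : ∃ q : G.Walk a b,
      IsRainbow (extendColoring c) q ∧ Fin.last k ∉ q.edges.map (extendColoring c) := by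
    obtain ⟨p, hp⟩ := hc a b
    obtain ⟨q, hq⟩ := exists_walk_edges_eq_map_val p
    have hcolors : q.edges.map (extendColoring c) = (p.edges.map c).map Fin.castSucc := by
      simp [hq, extendColoring_map_val]
    refine ⟨q, ?_, ?_⟩
    · rw [IsRainbow, hcolors]
      exact List.Nodup.map (Fin.castSucc_injective k) hp
    · simp [hcolors, Fin.castSucc_ne_last]
  have from_u (b : V) (hb : b ≠ u) : ∃ q : G.Walk u b, IsRainbow (extendColoring c) q := by
    have : Nontrivial V := ⟨b, u, hb⟩
    obtain ⟨w, huw⟩ := hG.exists_adj_of_nontrivial u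
    obtain ⟨q, hq, hlast⟩ := avoiding_u ⟨w, huw.ne'⟩ ⟨b, hb⟩
    refine ⟨.cons huw q, ?_⟩
    rw [IsRainbow, Walk.edges_cons, List.map_cons, extendColoring_mk_left]
    exact hq.cons hlast
  intro a b
  by_cases ha : a = u <;> by_cases hb : b = u
  · subst ha hb
    exact ⟨.nil, .nil⟩
  · subst ha
    exact from_u b hb
  · subst hb
    obtain ⟨q, hq⟩ := from_u a ha
    exact ⟨q.reverse, hq.reverse⟩
  · obtain ⟨q, hq, -⟩ := avoiding_u ⟨a, ha⟩ ⟨b, hb⟩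
    exact ⟨q, hq⟩

end AddVertex

section Tripartite

variable {V : Type*} {G : SimpleGraph V}

/-- The edge coloring that gives an edge between the parts `i` and `j` of a partition
`p : V → Fin 3` the color `i + j`. Addition modulo 3 makes the colors `0 + 1`, `1 + 2` and `2 + 0`
distinct. -/
def partSum (p : V → Fin 3) (e : Sym2 V) : Fin 3 :=
  (e.map p).add

theorem isRainbowColoring_partSum {p : V → Fin 3} (hp : p.Surjective)
    (hG : (⊤ : SimpleGraph (Fin 3)).comap p ≤ G) : IsRainbowColoring G (partSum p) := by
  have adj {x y : V} (h : p x ≠ p y) : G.Adj x y := hG h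
  intro x t
  by_cases hxt : p x = p t
  · obtain ⟨y, hy⟩ := hp (p x + 1)
    obtain ⟨z, hz⟩ := hp (p x + 2)
    have hxy : p x ≠ p y := by simp [hy]
    have hyz : p y ≠ p z := by simp [hy, hz]
    have hzt : p z ≠ p t := by simp [hz, ← hxt]
    refine ⟨.cons (adj hxy) (.cons (adj hyz) (.cons (adj hzt) .nil)), ?_⟩
    have distinct (i : Fin 3) : [i + (i + 1), i + 1 + (i + 2), i + 2 + i].Nodup := by
      decide +revert
    simpa [IsRainbow, partSum, hy, hz, ← hxt] using distinct (p x)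
  · exact ⟨.cons (adj hxt) .nil, by simp [IsRainbow]⟩

end Tripartite

section Components

variable {V : Type*} (G : SimpleGraph V)

theorem comap_connectedComponentMk_top_le_compl {ι : Type*} (f : G.ConnectedComponent → ι) :
    (⊤ : SimpleGraph ι).comap (f ∘ G.connectedComponentMk) ≤ Gᶜ := by
  intro x y hxy
  refine (compl_adj ..).2 ⟨?_, fun h ↦ hxy ?_⟩
  · rintro rfl
    exact hxy rfl
  · exact congrArg f (ConnectedComponent.sound h.reachable)

theorem compl_induce (s : Set V) : (G.induce s)ᶜ = Gᶜ.induce s := by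
  ext x y
  simp [Subtype.ext_iff]

theorem exists_surjective_fin {α : Type*} {n : ℕ} [NeZero n] (h : n ≤ ENat.card α) :
    ∃ f : α → Fin n, f.Surjective := by
  have hcard : (n : Cardinal) ≤ Cardinal.mk α := by simpa [ENat.card] using h
  refine Function.exists_surjective_iff.2 ⟨⟨fun _ ↦ 0⟩, ?_⟩
  exact Cardinal.lift_mk_le'.1 (by simpa using hcard)

variable {G} in
theorem exists_isRainbowColoring_compl (h : 3 ≤ ENat.card G.ConnectedComponent) :
    ∃ c : Sym2 V → Fin 3, IsRainbowColoring Gᶜ c := by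
  obtain ⟨f, hf⟩ := exists_surjective_fin (n := 3) h
  exact ⟨_, isRainbowColoring_partSum (hf.comp Quot.mk_surjective)
    (comap_connectedComponentMk_top_le_compl G f)⟩

end Components

theorem pc_compl_le_four_of_three_components_general {V : Type*} (G : SimpleGraph V)
    (hGc : Gᶜ.Connected) (u : V)
    (hcut : 3 ≤ ENat.card (G.induce ({u}ᶜ : Set V)).ConnectedComponent) :
    ∃ c : Sym2 V → ℕ, ∀ ℓ, Gᶜ.IsPCColoring ℓ 4 c := by
  obtain ⟨c, hc⟩ := exists_isRainbowColoring_compl hcut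
  rw [compl_induce] at hc
  exact ⟨_, (hc.extend hGc.preconnected).isPCColoring⟩

/-- If `G` and its complement are both connected and `G` has a cut vertex `u` such
that `G - u` has at least three connected components, then `pc_{1,2}(Ḡ) ≤ 4`. -/
theorem pc_compl_le_four_of_three_components {V : Type*} [Fintype V]
    (G : SimpleGraph V) (hG : G.Connected) (hGc : Gᶜ.Connected) (u : V)
    (hcut : 3 ≤ Nat.card ((G.induce ({u}ᶜ : Set V)).ConnectedComponent)) :
    Gᶜ.pc 2 ≤ 4 := by
  have hcut' : 3 ≤ ENat.card (G.induce ({u}ᶜ : Set V)).ConnectedComponent := by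
    rw [ENat.card_eq_coe_natCard]
    exact_mod_cast hcut
  obtain ⟨c, hc⟩ := pc_compl_le_four_of_three_components_general G hGc u hcut'
  exact Nat.sInf_le ⟨c, hc 2⟩
end
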